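/- arXiv:1802.04826 — 4 statements merged into one kernel-verified Lean document; each statement's English description precedes it below -/
import Mathlib

section
/- Let p, d ≥ 1, let x_1, …, x_n ∈ ℝ^p be data points, let P be a probability measure on ℝ^d that is absolutely continuous with respect to Lebesgue measure and has mean zero, fix i ∈ {1,…,n} and w ∈ ℝ^d with w ≠ 0, and let (α_k)_{k≥1} be a sequence of nonnegative reals with α_k → +∞. For each k define σ_k²(z) = exp(α_k·tanh(α_k·(wᵀz)) − α_k) for z ∈ ℝ^d. Then the log-likelihood ℓ_k = Σ_{j=1}^n log ∫_{ℝ^d} N(x_j | x_i, σ_k²(z)·I_p) dP(z) satisfies ℓ_k → +∞ as k → +∞. -/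
open MeasureTheory Filter Real

/-- The multivariate Gaussian density
`N(x|μ,Σ) = (2π)^{-p/2} det(Σ)^{-1/2} exp(−(x−μ)ᵀ Σ⁻¹ (x−μ)/2)`. -/
noncomputable def gaussDensity {p : ℕ} (x μ : Fin p → ℝ) (S : Matrix (Fin p) (Fin p) ℝ) : ℝ :=
  (2 * π) ^ (-(p : ℝ) / 2) * S.det ^ (-(1 : ℝ) / 2) *
    Real.exp (-(dotProduct (x - μ) (S⁻¹.mulVec (x - μ))) / 2)

/-!
On the half-space `wᵀz ≤ 0` the log-variance is at most `-α_k`, so the likelihood of the point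
`x i`, at which the Gaussians are centred, grows at least like `exp (p α_k / 2)`. On the half-space
`0 < wᵀz` the log-variance lies between `-1 / wᵀz` and `0` for every `k`, so the likelihoods of all
the data points stay above positive constants. Both half-spaces have positive mass, because `wᵀz`
has mean zero and does not vanish almost surely.
-/

section HalfSpaces

lemma measure_pos_ne_zero_of_integral_eq_zero {Ω : Type*} [MeasurableSpace Ω] {P : Measure Ω}
    {f : Ω → ℝ} (hf : Integrable f P) (hmean : ∫ z, f z ∂P = 0) (hne : ¬ f =ᵐ[P] 0) :
    P {z | 0 < f z} ≠ 0 := by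
  intro hnull
  have hnonneg : 0 ≤ᵐ[P] -f := by
    filter_upwards [measure_eq_zero_iff_ae_notMem.1 hnull] with z hz
    exact neg_nonneg.2 (not_lt.1 hz)
  have hneg : -f =ᵐ[P] 0 := by
    rw [← integral_eq_zero_iff_of_nonneg_ae hnonneg hf.neg, integral_neg', hmean, neg_zero]
  exact hne (by filter_upwards [hneg] with z hz using neg_eq_zero.1 hz)

lemma dotProductBilin_ne_zero {ι : Type*} [Fintype ι] {w : ι → ℝ} (hw : w ≠ 0) :
    dotProductBilin ℝ ℝ w ≠ 0 :=
  fun h ↦ hw (dotProduct_self_eq_zero.1 (LinearMap.congr_fun h w))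

variable {E : Type*} [NormedAddCommGroup E] [NormedSpace ℝ E] [FiniteDimensional ℝ E]
  [MeasurableSpace E] {P : Measure E}

lemma integrable_linearMap (hint : Integrable (fun z ↦ z) P) (L : E →ₗ[ℝ] ℝ) :
    Integrable L P :=
  L.toContinuousLinearMap.integrable_comp hint

lemma integral_linearMap_eq_zero (hint : Integrable (fun z ↦ z) P) (hmean : ∫ z, z ∂P = 0)
    (L : E →ₗ[ℝ] ℝ) : ∫ z, L z ∂P = 0 := by
  simpa [hmean] using L.toContinuousLinearMap.integral_comp_comm hint

lemma measure_linearMap_nonpos_ne_zero [IsProbabilityMeasure P]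
    (hint : Integrable (fun z ↦ z) P) (hmean : ∫ z, z ∂P = 0) (L : E →ₗ[ℝ] ℝ) :
    P {z | L z ≤ 0} ≠ 0 := by
  simpa only [integral_linearMap_eq_zero hint hmean L] using
    (measure_le_integral_pos (integrable_linearMap hint L)).ne'

lemma not_linearMap_ae_eq_zero [BorelSpace E] {ν : Measure E} [ν.IsAddHaarMeasure] [NeZero P]
    (hac : P ≪ ν) {L : E →ₗ[ℝ] ℝ} (hL : L ≠ 0) : ¬ L =ᵐ[P] 0 := by
  intro hzero
  have hker : P (LinearMap.ker L) = 0 :=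
    hac (Measure.addHaar_submodule ν _ fun h ↦ hL (LinearMap.ker_eq_top.1 h))
  have hfalse : ∀ᵐ _ ∂P, False := by
    filter_upwards [hzero, measure_eq_zero_iff_ae_notMem.1 hker] with z hz hnot using hnot hz
  exact hfalse.exists.elim fun _ h ↦ h

lemma measure_linearMap_pos_ne_zero [BorelSpace E] {ν : Measure E} [ν.IsAddHaarMeasure] [NeZero P]
    (hac : P ≪ ν) (hint : Integrable (fun z ↦ z) P) (hmean : ∫ z, z ∂P = 0)
    {L : E →ₗ[ℝ] ℝ} (hL : L ≠ 0) : P {z | 0 < L z} ≠ 0 :=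
  measure_pos_ne_zero_of_integral_eq_zero (integrable_linearMap hint L)
    (integral_linearMap_eq_zero hint hmean L) (not_linearMap_ae_eq_zero hac hL)

end HalfSpaces

section LogVariance

lemma mul_one_sub_tanh_le_one (s : ℝ) : s * (1 - tanh s) ≤ 1 := by
  have hexp : s * exp (-s) ≤ 1 := by
    calc s * exp (-s) ≤ exp s * exp (-s) := by gcongr; linarith [add_one_le_exp s]
      _ = 1 := by rw [← exp_add, add_neg_cancel, exp_zero]
  have htanh : s * (1 - tanh s) = s * exp (-s) / cosh s := by
    rw [tanh_eq_sinh_div_cosh, ← cosh_sub_sinh]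
    field_simp
  rw [htanh, div_le_one (cosh_pos s)]
  exact hexp.trans (one_le_cosh s)

/-- The log-variance `log σ² = a tanh (a u) - a` of the decoder with sharpness `a`, as a function of
the score `u = wᵀz` of the latent variable. -/
noncomputable def logVariance (a u : ℝ) : ℝ := a * tanh (a * u) - a

variable {a u : ℝ}

lemma measurable_logVariance (a : ℝ) : Measurable (logVariance a) := by
  unfold logVariance
  simp only [tanh_eq_sinh_div_cosh]
  fun_prop

lemma logVariance_nonpos (ha : 0 ≤ a) : logVariance a u ≤ 0 :=
  sub_nonpos.2 (mul_le_of_le_one_right ha (tanh_lt_one _).le)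

lemma neg_two_mul_le_logVariance (ha : 0 ≤ a) : -(2 * a) ≤ logVariance a u := by
  unfold logVariance
  linarith [mul_le_mul_of_nonneg_left (neg_one_lt_tanh (a * u)).le ha]

lemma logVariance_le_neg (ha : 0 ≤ a) (hu : u ≤ 0) : logVariance a u ≤ -a := by
  have htanh : tanh (a * u) ≤ 0 := by
    rw [tanh_eq_sinh_div_cosh]
    exact div_nonpos_of_nonpos_of_nonneg
      (sinh_nonpos_iff.2 (mul_nonpos_of_nonneg_of_nonpos ha hu)) (cosh_pos _).le
  unfold logVariance
  linarith [mul_nonpos_of_nonneg_of_nonpos ha htanh]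

lemma neg_inv_le_logVariance (a : ℝ) (hu : 0 < u) : -u⁻¹ ≤ logVariance a u := by
  have hle : a * (1 - tanh (a * u)) ≤ u⁻¹ := by
    rw [← one_div, le_div_iff₀ hu]
    linarith [mul_one_sub_tanh_le_one (a * u)]
  unfold logVariance
  linarith

end LogVariance

section IsotropicGaussian

variable {p : ℕ} {x μ : Fin p → ℝ} {s t : ℝ}

lemma gaussDensity_exp_smul_one (x μ : Fin p → ℝ) (t : ℝ) :
    gaussDensity x μ (exp t • (1 : Matrix (Fin p) (Fin p) ℝ)) =
      (2 * π) ^ (-(p : ℝ) / 2) * exp (-(p * t) / 2) *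
        exp (-(exp (-t) * ((x - μ) ⬝ᵥ (x - μ))) / 2) := by
  have hdet : (exp t • (1 : Matrix (Fin p) (Fin p) ℝ)).det ^ (-(1 : ℝ) / 2) =
      exp (-(p * t) / 2) := by
    rw [Matrix.det_smul, Matrix.det_one, mul_one, Fintype.card_fin, ← exp_nat_mul, ← exp_mul]
    ring_nf
  have hinv : (exp t • (1 : Matrix (Fin p) (Fin p) ℝ))⁻¹ = exp (-t) • 1 := by
    apply Matrix.inv_eq_right_inv
    rw [smul_mul_smul_comm, mul_one, ← exp_add, add_neg_cancel, exp_zero, one_smul]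
  rw [gaussDensity, hdet, hinv, Matrix.smul_mulVec, Matrix.one_mulVec, dotProduct_smul, smul_eq_mul]

lemma gaussDensity_exp_smul_one_nonneg :
    0 ≤ gaussDensity x μ (exp t • (1 : Matrix (Fin p) (Fin p) ℝ)) := by
  rw [gaussDensity_exp_smul_one]
  positivity

lemma exp_neg_mul_dotProduct_self_le_one {ι : Type*} [Fintype ι] (t : ℝ) (y : ι → ℝ) :
    exp (-(exp (-t) * (y ⬝ᵥ y)) / 2) ≤ 1 := by
  have hquad : 0 ≤ y ⬝ᵥ y := dotProduct_star_self_nonneg y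
  rw [exp_le_one_iff, neg_div, neg_nonpos]
  positivity

lemma gaussDensity_exp_smul_one_le (hst : s ≤ t) :
    gaussDensity x μ (exp t • (1 : Matrix (Fin p) (Fin p) ℝ)) ≤
      (2 * π) ^ (-(p : ℝ) / 2) * exp (-(p * s) / 2) := by
  rw [gaussDensity_exp_smul_one]
  refine (mul_le_of_le_one_right (by positivity)
    (exp_neg_mul_dotProduct_self_le_one t (x - μ))).trans ?_
  gcongr

lemma le_gaussDensity_self_exp_smul_one (hts : t ≤ s) :
    (2 * π) ^ (-(p : ℝ) / 2) * exp (-(p * s) / 2) ≤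
      gaussDensity μ μ (exp t • (1 : Matrix (Fin p) (Fin p) ℝ)) := by
  rw [gaussDensity_exp_smul_one, sub_self, dotProduct_zero, mul_zero, neg_zero, zero_div,
    exp_zero, mul_one]
  gcongr

lemma le_gaussDensity_exp_smul_one (hst : s ≤ t) (ht : t ≤ 0) :
    (2 * π) ^ (-(p : ℝ) / 2) * exp (-(exp (-s) * ((x - μ) ⬝ᵥ (x - μ))) / 2) ≤
      gaussDensity x μ (exp t • (1 : Matrix (Fin p) (Fin p) ℝ)) := by
  have hquad : 0 ≤ (x - μ) ⬝ᵥ (x - μ) := dotProduct_star_self_nonneg (x - μ)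
  have hscale : 1 ≤ exp (-(p * t) / 2) := by
    rw [one_le_exp_iff, neg_div, neg_nonneg]
    exact div_nonpos_of_nonpos_of_nonneg
      (mul_nonpos_of_nonneg_of_nonpos p.cast_nonneg ht) zero_le_two
  rw [gaussDensity_exp_smul_one]
  gcongr
  exact le_mul_of_one_le_right (by positivity) hscale

end IsotropicGaussian

section MarginalLikelihood

variable {Ω : Type*} [MeasurableSpace Ω] {p : ℕ}

/-- The likelihood of the observation `x` under the latent variable model with prior `P`, constant
mean decoder `μ` and isotropic covariance decoder `z ↦ exp (t z) • 1`. -/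
noncomputable def marginalLikelihood (P : Measure Ω) (t : Ω → ℝ) (x μ : Fin p → ℝ) : ℝ :=
  ∫ z, gaussDensity x μ (exp (t z) • (1 : Matrix (Fin p) (Fin p) ℝ)) ∂P

variable {P : Measure Ω} [IsFiniteMeasure P] {t : Ω → ℝ} {b : ℝ}

lemma integrable_gaussDensity_exp_smul_one (ht : Measurable t) (hb : ∀ z, b ≤ t z)
    (x μ : Fin p → ℝ) :
    Integrable (fun z ↦ gaussDensity x μ (exp (t z) • (1 : Matrix (Fin p) (Fin p) ℝ))) P := by
  refine .of_bound (Measurable.aestronglyMeasurable ?_)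
    ((2 * π) ^ (-(p : ℝ) / 2) * exp (-(p * b) / 2)) (.of_forall fun z ↦ ?_)
  · simp only [gaussDensity_exp_smul_one]
    fun_prop
  · rw [norm_of_nonneg gaussDensity_exp_smul_one_nonneg]
    exact gaussDensity_exp_smul_one_le (hb z)

lemma le_marginalLikelihood_self (ht : Measurable t) (hb : ∀ z, b ≤ t z) {s : ℝ} {A : Set Ω}
    (hA : ∀ z ∈ A, t z ≤ s) (μ : Fin p → ℝ) :
    (2 * π) ^ (-(p : ℝ) / 2) * exp (-(p * s) / 2) * P.real A ≤ marginalLikelihood P t μ μ := by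
  set c := (2 * π) ^ (-(p : ℝ) / 2) * exp (-(p * s) / 2)
  have hsub : A ⊆ {z | c ≤ gaussDensity μ μ (exp (t z) • (1 : Matrix (Fin p) (Fin p) ℝ))} :=
    fun z hz ↦ le_gaussDensity_self_exp_smul_one (hA z hz)
  calc c * P.real A
      ≤ c * P.real {z | c ≤ gaussDensity μ μ (exp (t z) • (1 : Matrix (Fin p) (Fin p) ℝ))} := by
        gcongr
        exact measure_ne_top P _
    _ ≤ marginalLikelihood P t μ μ :=
        mul_meas_ge_le_integral_of_nonneg (.of_forall fun _ ↦ gaussDensity_exp_smul_one_nonneg)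
          (integrable_gaussDensity_exp_smul_one ht hb μ μ) c

lemma exists_pos_forall_le_marginalLikelihood {s : Ω → ℝ} (hs : Measurable s) {A : Set Ω}
    (hA : MeasurableSet A) (hPA : P A ≠ 0) (x μ : Fin p → ℝ) :
    ∃ c > 0, ∀ (t : Ω → ℝ) (b : ℝ), Measurable t → (∀ z, b ≤ t z) →
      (∀ z ∈ A, s z ≤ t z) → (∀ z ∈ A, t z ≤ 0) → c ≤ marginalLikelihood P t x μ := by
  let g (z : Ω) : ℝ :=
    (2 * π) ^ (-(p : ℝ) / 2) * exp (-(exp (-s z) * ((x - μ) ⬝ᵥ (x - μ))) / 2)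
  have hgpos (z : Ω) : 0 < g z := by positivity
  have hgint : Integrable g P := by
    refine .of_bound (by fun_prop) ((2 * π) ^ (-(p : ℝ) / 2)) (.of_forall fun z ↦ ?_)
    rw [norm_of_nonneg (hgpos z).le]
    exact mul_le_of_le_one_right (by positivity) (exp_neg_mul_dotProduct_self_le_one (s z) (x - μ))
  refine ⟨∫ z in A, g z ∂P, ?_, fun t b ht hb hst ht0 ↦ ?_⟩
  · have hsupp : Function.support g = Set.univ :=
      Set.eq_univ_of_forall fun z ↦ (hgpos z).ne'
    rw [gt_iff_lt, setIntegral_pos_iff_support_of_nonneg_ae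
      (.of_forall fun z ↦ (hgpos z).le) hgint.integrableOn, hsupp, Set.univ_inter]
    exact pos_iff_ne_zero.2 hPA
  · have hfint := integrable_gaussDensity_exp_smul_one (P := P) ht hb x μ
    calc ∫ z in A, g z ∂P
        ≤ ∫ z in A, gaussDensity x μ (exp (t z) • (1 : Matrix (Fin p) (Fin p) ℝ)) ∂P :=
          setIntegral_mono_on hgint.integrableOn hfint.integrableOn hA fun z hz ↦
            le_gaussDensity_exp_smul_one (hst z hz) (ht0 z hz)
      _ ≤ marginalLikelihood P t x μ :=
          setIntegral_le_integral hfint (.of_forall fun _ ↦ gaussDensity_exp_smul_one_nonneg)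

end MarginalLikelihood

section Divergence

variable {Ω κ : Type*} [MeasurableSpace Ω] {p : ℕ} {P : Measure Ω} [IsFiniteMeasure P]
  {u : Ω → ℝ} {l : Filter κ} {α : κ → ℝ}

lemma tendsto_marginalLikelihood_self_atTop (hp : 0 < p) (hu : Measurable u)
    (hnonpos : P {z | u z ≤ 0} ≠ 0) (hα : Tendsto α l atTop) (μ : Fin p → ℝ) :
    Tendsto (fun k ↦ marginalLikelihood P (fun z ↦ logVariance (α k) (u z)) μ μ) l atTop := by
  set m := P.real {z | u z ≤ 0}
  have hm : 0 < m := ENNReal.toReal_pos hnonpos (measure_ne_top _ _)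
  have hbound : ∀ᶠ k in l, (2 * π) ^ (-(p : ℝ) / 2) * exp (-(p * -α k) / 2) * m ≤
      marginalLikelihood P (fun z ↦ logVariance (α k) (u z)) μ μ := by
    filter_upwards [hα.eventually_ge_atTop 0] with k hk
    exact le_marginalLikelihood_self ((measurable_logVariance _).comp hu)
      (fun _ ↦ neg_two_mul_le_logVariance hk) (fun _ ↦ logVariance_le_neg hk) μ
  refine tendsto_atTop_mono' l hbound (.atTop_mul_const hm (.const_mul_atTop (by positivity) ?_))
  simp only [mul_neg, neg_neg]
  exact tendsto_exp_atTop.comp ((hα.const_mul_atTop (by positivity)).atTop_div_const two_pos)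

lemma exists_pos_eventually_le_marginalLikelihood (hu : Measurable u)
    (hpos : P {z | 0 < u z} ≠ 0) (hα : Tendsto α l atTop) (x μ : Fin p → ℝ) :
    ∃ c > 0, ∀ᶠ k in l, c ≤ marginalLikelihood P (fun z ↦ logVariance (α k) (u z)) x μ := by
  obtain ⟨c, hc, hle⟩ := exists_pos_forall_le_marginalLikelihood hu.inv.neg
    (measurableSet_lt measurable_const hu) hpos x μ
  refine ⟨c, hc, ?_⟩
  filter_upwards [hα.eventually_ge_atTop 0] with k hk
  exact hle _ _ ((measurable_logVariance _).comp hu) (fun _ ↦ neg_two_mul_le_logVariance hk)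
    (fun _ ↦ neg_inv_le_logVariance _) (fun _ _ ↦ logVariance_nonpos hk)

theorem statement0_general {ι : Type*} [Fintype ι] (hp : 0 < p) (x : ι → Fin p → ℝ) (i : ι)
    (hu : Measurable u) (hnonpos : P {z | u z ≤ 0} ≠ 0) (hpos : P {z | 0 < u z} ≠ 0)
    (hα : Tendsto α l atTop) :
    Tendsto (fun k ↦ ∑ j, log (∫ z, gaussDensity (x j) (x i)
        (exp (α k * tanh (α k * u z) - α k) • (1 : Matrix (Fin p) (Fin p) ℝ)) ∂P)) l atTop := by
  classical
  change Tendsto (fun k ↦ ∑ j, log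
    (marginalLikelihood P (fun z ↦ logVariance (α k) (u z)) (x j) (x i))) l atTop
  choose c hc hle using fun j ↦ exists_pos_eventually_le_marginalLikelihood hu hpos hα (x j) (x i)
  simp only [← Finset.add_sum_erase _ _ (Finset.mem_univ i)]
  refine tendsto_atTop_add_right_of_le' l (∑ j ∈ Finset.univ.erase i, log (c j))
    (tendsto_log_atTop.comp (tendsto_marginalLikelihood_self_atTop hp hu hnonpos hα (x i))) ?_
  filter_upwards [eventually_all.2 hle] with k hk
  exact Finset.sum_le_sum fun j _ ↦ log_le_log (hc j) (hk j)

end Divergence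

/-- Theorem 1 of the paper: along the sequence of decoders with constant mean `x i` and
isotropic covariance `σ_k²(z)·I_p`, where `σ_k²(z) = exp(α_k tanh(α_k wᵀz) − α_k)`,
the log-likelihood diverges to `+∞`. -/
theorem statement0 (p d n : ℕ) (hp : 1 ≤ p) (hd : 1 ≤ d)
    (x : Fin n → (Fin p → ℝ))
    (P : Measure (Fin d → ℝ)) [IsProbabilityMeasure P]
    (hac : P ≪ volume)
    (hintP : Integrable (fun z : Fin d → ℝ => z) P)
    (hmean : (∫ z, z ∂P) = 0)
    (i : Fin n) (w : Fin d → ℝ) (hw : w ≠ 0)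
    (α : ℕ → ℝ) (hα0 : ∀ k, 0 ≤ α k) (hα : Tendsto α atTop atTop) :
    Tendsto (fun k : ℕ => ∑ j : Fin n, Real.log (∫ z,
        gaussDensity (x j) (x i)
          (Real.exp (α k * Real.tanh (α k * dotProduct w z) - α k) •
            (1 : Matrix (Fin p) (Fin p) ℝ)) ∂P))
      atTop atTop := by
  exact statement0_general hp x i (u := dotProductBilin ℝ ℝ w) (by fun_prop)
    (measure_linearMap_nonpos_ne_zero hintP hmean _)
    (measure_linearMap_pos_ne_zero hac hintP hmean (dotProductBilin_ne_zero hw)) hα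
end

section
/- Let p, d ≥ 1, ξ > 0, let P be a probability measure on ℝ^d, let μ: ℝ^d → ℝ^p be measurable, and let Σ: ℝ^d → (p×p positive-semidefinite matrices) be measurable such that every eigenvalue of Σ(z) is at least ξ for all z ∈ ℝ^d. Then for every x ∈ ℝ^p, ∫_{ℝ^d} N(x | μ(z), Σ(z)) dP(z) ≤ (2πξ)^{-p/2}. Consequently, for any data x_1,…,x_n ∈ ℝ^p, the log-likelihood Σ_{i=1}^n log ∫ N(x_i | μ(z), Σ(z)) dP(z) is bounded above by −(np/2)·log(2πξ). -/
open MeasureTheory Filter Real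

/-!
Since `Σ(z) ⪰ ξ I`, all eigenvalues of `Σ(z)` are at least `ξ`, hence `det Σ(z) ≥ ξ ^ p`; as the
exponential factor is at most `1`, the density is bounded by `(2πξ) ^ (-p/2)` uniformly in `z`, and
averaging over a probability measure preserves the bound. The densities are strictly positive, so
the marginal density is too, and the logarithm may be taken on both sides.
-/

section Matrix

open scoped ComplexOrder

variable {𝕜 ι : Type*} [RCLike 𝕜] [DecidableEq ι] {A : Matrix ι ι 𝕜} {ξ : ℝ}

theorem posDef_of_posSemidef_sub_smul_one (hξ : 0 < ξ)
    (h : (A - ξ • (1 : Matrix ι ι 𝕜)).PosSemidef) : A.PosDef := by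
  simpa only [sub_add_cancel] using Matrix.PosDef.posSemidef_add h (Matrix.PosDef.one.smul hξ)

variable [Fintype ι]

open scoped MatrixOrder in
theorem le_eigenvalues_of_posSemidef_sub_smul_one (hA : A.IsHermitian)
    (h : (A - ξ • (1 : Matrix ι ι 𝕜)).PosSemidef) (i : ι) : ξ ≤ hA.eigenvalues i := by
  have h_le : algebraMap ℝ (Matrix ι ι 𝕜) ξ ≤ A := by
    rwa [Algebra.algebraMap_eq_smul_one, Matrix.le_iff]
  exact (algebraMap_le_iff_le_spectrum hA.isSelfAdjoint).mp h_le _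
    (hA.eigenvalues_mem_spectrum_real i)

theorem pow_card_le_det_of_posSemidef_sub_smul_one (hξ : 0 ≤ ξ)
    (h : (A - ξ • (1 : Matrix ι ι 𝕜)).PosSemidef) : (ξ : 𝕜) ^ Fintype.card ι ≤ A.det := by
  have hA : A.IsHermitian := by
    simpa only [sub_add_cancel] using (h.add (Matrix.PosSemidef.one.smul hξ)).isHermitian
  rw [hA.det_eq_prod_eigenvalues, ← Finset.card_univ, ← Finset.prod_const]
  refine Finset.prod_le_prod (fun _ _ ↦ by simpa using hξ) fun i _ ↦ ?_
  simpa using le_eigenvalues_of_posSemidef_sub_smul_one hA h i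

end Matrix

theorem integral_pos_of_ae_pos {Ω : Type*} [MeasurableSpace Ω] {P : Measure Ω} [NeZero P]
    {f : Ω → ℝ} (hf : Integrable f P) (hpos : ∀ᵐ z ∂P, 0 < f z) : 0 < ∫ z, f z ∂P := by
  have hnonneg : 0 ≤ᵐ[P] f := hpos.mono fun _ hz ↦ hz.le
  refine (integral_nonneg_of_ae hnonneg).lt_of_ne' fun hzero ↦ ?_
  have hf_zero : f =ᵐ[P] 0 := (integral_eq_zero_iff_of_nonneg_ae hnonneg hf).mp hzero
  obtain ⟨z, hz_pos, hz_zero⟩ := (hpos.and hf_zero).exists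
  exact hz_pos.ne' hz_zero

section Measurability

variable {Ω ι : Type*} [MeasurableSpace Ω] {P : Measure Ω} [Fintype ι] [DecidableEq ι]

theorem aemeasurable_matrix_det {R : Type*} [CommRing R] [MeasurableSpace R] [MeasurableAdd₂ R]
    [MeasurableMul₂ R] {A : Ω → Matrix ι ι R} (hA : ∀ i j, AEMeasurable (fun z ↦ A z i j) P) :
    AEMeasurable (fun z ↦ (A z).det) P := by
  simp only [Matrix.det_apply']
  exact Finset.aemeasurable_fun_sum _ fun σ _ ↦
    (Finset.aemeasurable_fun_prod _ fun i _ ↦ hA (σ i) i).const_mul _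

theorem aemeasurable_matrix_inv_apply {K : Type*} [Field K] [MeasurableSpace K] [MeasurableAdd₂ K]
    [MeasurableMul₂ K] [MeasurableInv K] {A : Ω → Matrix ι ι K}
    (hA : ∀ i j, AEMeasurable (fun z ↦ A z i j) P) (i j : ι) :
    AEMeasurable (fun z ↦ (A z)⁻¹ i j) P := by
  simp only [Matrix.inv_def, Matrix.smul_apply, Ring.inverse_eq_inv', smul_eq_mul,
    Matrix.adjugate_apply]
  refine (aemeasurable_matrix_det hA).inv.mul (aemeasurable_matrix_det fun k l ↦ ?_)
  simp only [Matrix.updateRow_apply]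
  split_ifs
  · exact aemeasurable_const
  · exact hA k l

end Measurability

section Density

variable {p : ℕ} {S : Matrix (Fin p) (Fin p) ℝ} {ξ : ℝ}

theorem gaussDensity_pos (x μ : Fin p → ℝ) (hS : S.PosDef) : 0 < gaussDensity x μ S := by
  have hdet : 0 < S.det := hS.det_pos
  unfold gaussDensity
  positivity

theorem gaussDensity_le_mul_det_rpow (x μ : Fin p → ℝ) (hS : S.PosSemidef) :
    gaussDensity x μ S ≤ (2 * π) ^ (-(p : ℝ) / 2) * S.det ^ (-(1 : ℝ) / 2) := by
  have hdet : 0 ≤ S.det := hS.det_nonneg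
  have hquad : 0 ≤ dotProduct (x - μ) (S⁻¹.mulVec (x - μ)) := by
    simpa only [star_trivial] using hS.inv.dotProduct_mulVec_nonneg (x - μ)
  refine mul_le_of_le_one_right (by positivity) (Real.exp_le_one_iff.mpr ?_)
  linarith

theorem gaussDensity_le_rpow (x μ : Fin p → ℝ) (hξ : 0 < ξ)
    (h : (S - ξ • (1 : Matrix (Fin p) (Fin p) ℝ)).PosSemidef) :
    gaussDensity x μ S ≤ (2 * π * ξ) ^ (-(p : ℝ) / 2) := by
  have hS : S.PosDef := posDef_of_posSemidef_sub_smul_one hξ h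
  have hdet : ξ ^ p ≤ S.det := by
    simpa using pow_card_le_det_of_posSemidef_sub_smul_one hξ.le h
  calc gaussDensity x μ S
      ≤ (2 * π) ^ (-(p : ℝ) / 2) * S.det ^ (-(1 : ℝ) / 2) :=
        gaussDensity_le_mul_det_rpow x μ hS.posSemidef
    _ ≤ (2 * π) ^ (-(p : ℝ) / 2) * (ξ ^ p) ^ (-(1 : ℝ) / 2) := by
        gcongr ?_ * ?_
        exact Real.rpow_le_rpow_of_nonpos (pow_pos hξ p) hdet (by norm_num)
    _ = (2 * π) ^ (-(p : ℝ) / 2) * ξ ^ (-(p : ℝ) / 2) := by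
        rw [← Real.rpow_natCast_mul hξ.le, mul_div_assoc', mul_neg_one]
    _ = (2 * π * ξ) ^ (-(p : ℝ) / 2) := (Real.mul_rpow two_pi_pos.le hξ.le).symm

end Density

section Mixture

variable {Ω : Type*} [MeasurableSpace Ω] {P : Measure Ω} {p : ℕ} {ξ : ℝ}
  {μ : Ω → Fin p → ℝ} {S : Ω → Matrix (Fin p) (Fin p) ℝ}

theorem aemeasurable_gaussDensity (x : Fin p → ℝ) (hμ : AEMeasurable μ P)
    (hS : ∀ i j, AEMeasurable (fun z ↦ S z i j) P) :
    AEMeasurable (fun z ↦ gaussDensity x (μ z) (S z)) P := by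
  have hsub (i : Fin p) : AEMeasurable (fun z ↦ x i - μ z i) P :=
    (aemeasurable_pi_iff.mp hμ i).const_sub (x i)
  have hquad : AEMeasurable
      (fun z ↦ dotProduct (x - μ z) ((S z)⁻¹.mulVec (x - μ z))) P :=
    Finset.aemeasurable_fun_sum _ fun i _ ↦ (hsub i).mul <|
      Finset.aemeasurable_fun_sum Finset.univ fun j _ ↦
        (aemeasurable_matrix_inv_apply hS i j).mul (hsub j)
  exact (((aemeasurable_matrix_det hS).pow_const _).const_mul _).mul (hquad.neg.div_const _).exp

theorem integrable_gaussDensity [IsFiniteMeasure P] (x : Fin p → ℝ) (hξ : 0 < ξ)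
    (hμ : AEMeasurable μ P) (hS : ∀ i j, AEMeasurable (fun z ↦ S z i j) P)
    (h : ∀ᵐ z ∂P, (S z - ξ • (1 : Matrix (Fin p) (Fin p) ℝ)).PosSemidef) :
    Integrable (fun z ↦ gaussDensity x (μ z) (S z)) P := by
  refine Integrable.of_bound (aemeasurable_gaussDensity x hμ hS).aestronglyMeasurable
    ((2 * π * ξ) ^ (-(p : ℝ) / 2)) ?_
  filter_upwards [h] with z hz
  rw [Real.norm_of_nonneg (gaussDensity_pos x (μ z) (posDef_of_posSemidef_sub_smul_one hξ hz)).le]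
  exact gaussDensity_le_rpow x (μ z) hξ hz

theorem integral_gaussDensity_pos [IsFiniteMeasure P] [NeZero P] (x : Fin p → ℝ) (hξ : 0 < ξ)
    (hμ : AEMeasurable μ P) (hS : ∀ i j, AEMeasurable (fun z ↦ S z i j) P)
    (h : ∀ᵐ z ∂P, (S z - ξ • (1 : Matrix (Fin p) (Fin p) ℝ)).PosSemidef) :
    0 < ∫ z, gaussDensity x (μ z) (S z) ∂P := by
  refine integral_pos_of_ae_pos (integrable_gaussDensity x hξ hμ hS h) ?_
  filter_upwards [h] with z hz
  exact gaussDensity_pos x (μ z) (posDef_of_posSemidef_sub_smul_one hξ hz)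

theorem integral_gaussDensity_le_rpow [IsProbabilityMeasure P] (x : Fin p → ℝ) (hξ : 0 < ξ)
    (hμ : AEMeasurable μ P) (hS : ∀ i j, AEMeasurable (fun z ↦ S z i j) P)
    (h : ∀ᵐ z ∂P, (S z - ξ • (1 : Matrix (Fin p) (Fin p) ℝ)).PosSemidef) :
    ∫ z, gaussDensity x (μ z) (S z) ∂P ≤ (2 * π * ξ) ^ (-(p : ℝ) / 2) :=
  calc ∫ z, gaussDensity x (μ z) (S z) ∂P
      ≤ ∫ _, (2 * π * ξ) ^ (-(p : ℝ) / 2) ∂P :=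
        integral_mono_ae (integrable_gaussDensity x hξ hμ hS h) (integrable_const _)
          (h.mono fun z hz ↦ gaussDensity_le_rpow x (μ z) hξ hz)
    _ = (2 * π * ξ) ^ (-(p : ℝ) / 2) := by simp

theorem log_integral_gaussDensity_le [IsProbabilityMeasure P] (x : Fin p → ℝ) (hξ : 0 < ξ)
    (hμ : AEMeasurable μ P) (hS : ∀ i j, AEMeasurable (fun z ↦ S z i j) P)
    (h : ∀ᵐ z ∂P, (S z - ξ • (1 : Matrix (Fin p) (Fin p) ℝ)).PosSemidef) :
    Real.log (∫ z, gaussDensity x (μ z) (S z) ∂P) ≤ -(p : ℝ) / 2 * Real.log (2 * π * ξ) := by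
  rw [← Real.log_rpow (by positivity)]
  exact Real.log_le_log (integral_gaussDensity_pos x hξ hμ hS h)
    (integral_gaussDensity_le_rpow x hξ hμ hS h)

theorem statement2_general [IsProbabilityMeasure P] (hξ : 0 < ξ)
    (hμ : AEMeasurable μ P) (hS : ∀ i j, AEMeasurable (fun z ↦ S z i j) P)
    (h : ∀ᵐ z ∂P, (S z - ξ • (1 : Matrix (Fin p) (Fin p) ℝ)).PosSemidef)
    {n : ℕ} (x : Fin n → Fin p → ℝ) :
    (∀ y : Fin p → ℝ, ∫ z, gaussDensity y (μ z) (S z) ∂P ≤ (2 * π * ξ) ^ (-(p : ℝ) / 2)) ∧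
    ∑ i, Real.log (∫ z, gaussDensity (x i) (μ z) (S z) ∂P) ≤
      -((n : ℝ) * p / 2) * Real.log (2 * π * ξ) := by
  refine ⟨fun y ↦ integral_gaussDensity_le_rpow y hξ hμ hS h, ?_⟩
  calc ∑ i, Real.log (∫ z, gaussDensity (x i) (μ z) (S z) ∂P)
      ≤ ∑ _ : Fin n, -(p : ℝ) / 2 * Real.log (2 * π * ξ) :=
        Finset.sum_le_sum fun i _ ↦ log_integral_gaussDensity_le (x i) hξ hμ hS h
    _ = -((n : ℝ) * p / 2) * Real.log (2 * π * ξ) := by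
        rw [Finset.sum_const, Finset.card_univ, Fintype.card_fin, nsmul_eq_mul]
        ring

end Mixture

/-- Proposition 2 of the paper: if every eigenvalue of the covariance decoder `S(z)` is at
least `ξ > 0` (expressed as `S(z)` and `S(z) − ξ·I` positive semidefinite), then every
marginal density value is at most `(2πξ)^{-p/2}` and the log-likelihood is bounded above by
`−(np/2)·log(2πξ)`. -/
theorem statement2 (p d n : ℕ) (hp : 1 ≤ p) (hd : 1 ≤ d) (ξ : ℝ) (hξ : 0 < ξ)
    (P : Measure (Fin d → ℝ)) [IsProbabilityMeasure P]
    (μ : (Fin d → ℝ) → (Fin p → ℝ)) (hμ : Measurable μ)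
    (S : (Fin d → ℝ) → Matrix (Fin p) (Fin p) ℝ)
    (hSmeas : ∀ a b, Measurable fun z => S z a b)
    (hSpsd : ∀ z, (S z).PosSemidef)
    (hSeig : ∀ z, (S z - ξ • (1 : Matrix (Fin p) (Fin p) ℝ)).PosSemidef)
    (x : Fin n → (Fin p → ℝ)) :
    (∀ y : Fin p → ℝ, (∫ z, gaussDensity y (μ z) (S z) ∂P) ≤ (2 * π * ξ) ^ (-(p : ℝ) / 2)) ∧
    (∑ i, Real.log (∫ z, gaussDensity (x i) (μ z) (S z) ∂P)) ≤
      -((n : ℝ) * p / 2) * Real.log (2 * π * ξ) :=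
  statement2_general hξ hμ.aemeasurable (fun a b ↦ (hSmeas a b).aemeasurable) (.of_forall hSeig) x
end

section
/- Let p, d ≥ 1, and let H and Φ be either the Bernoulli family (H = [0,1]^p, Φ(x|η) = ∏_j η_j^{x_j}(1−η_j)^{1−x_j}, data in {0,1}^p) or the ξ-constrained Gaussian family for some ξ > 0 (H the pairs (μ,Σ) with all eigenvalues of Σ at least ξ, Φ(x|(μ,Σ)) = N(x|μ,Σ), data in ℝ^p). Let P be the standard Gaussian measure on ℝ^d and fix data x_1,…,x_n. Then for every finitely supported probability measure G on H with ℓ(G) = Σ_{i=1}^n log ∫_H Φ(x_i|η) dG(η) finite, and every ε > 0, there exists a continuous function f: ℝ^d → H such that Σ_{i=1}^n log ∫_{ℝ^d} Φ(x_i | f(z)) dP(z) ≥ ℓ(G) − ε. -/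
open MeasureTheory Filter Real

/-- The multivariate Bernoulli density `Φ(x|η) = ∏_j η_j^{x_j} (1−η_j)^{1−x_j}`
on `{0,1}^p`, with `{0,1}` encoded as `Bool`. -/
noncomputable def bernDensity {p : ℕ} (x : Fin p → Bool) (η : Fin p → ℝ) : ℝ :=
  ∏ j, if x j then η j else 1 - η j

/-- The standard Gaussian measure on `ℝ^d`. -/
noncomputable def stdGaussian (d : ℕ) : Measure (Fin d → ℝ) :=
  Measure.pi fun _ => ProbabilityTheory.gaussianReal 0 1

/-!
An atomless prior on a Polish space can be mapped measurably onto any law (through its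
distribution function to the uniform law on `[0,1]`, and from there by quantiles), so it splits into
disjoint sets `A k` of mass exactly `q k`. Inner regularity shrinks these to closed sets `F k` that
keep a fraction `r < 1` of the mass, and a partition of unity interpolates the values `η k` on `F k`
by a continuous map into the convex hull of the `η k`. By nonnegativity of `Φ`, the integral of `Φ`
along this map is at least `r` times the mixture, which costs only `log r` per data point; both
parameter spaces are convex, so the map takes admissible values.
-/

section ProbabilityIntegralTransform

open ProbabilityTheory

variable (μ : Measure ℝ) [IsProbabilityMeasure μ] [NullSingletonClass μ]

lemma continuous_cdf : Continuous (cdf μ) := by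
  refine continuous_iff_continuousAt.2 fun x ↦ ?_
  rw [(monotone_cdf μ).continuousAt_iff_leftLim_eq_rightLim, StieltjesFunction.rightLim_eq]
  have jump_eq_zero : ENNReal.ofReal (cdf μ x - Function.leftLim (cdf μ) x) = 0 := by
    rw [← StieltjesFunction.measure_singleton, measure_cdf, measure_singleton]
  exact le_antisymm ((monotone_cdf μ).leftLim_le le_rfl)
    (sub_nonpos.1 (ENNReal.ofReal_eq_zero.1 jump_eq_zero))

lemma Ioo_subset_range_cdf : Set.Ioo 0 1 ⊆ Set.range (cdf μ) := by
  rintro u ⟨hu₀, hu₁⟩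
  obtain ⟨a, ha⟩ := ((tendsto_cdf_atBot μ).eventually_lt_const hu₀).exists
  obtain ⟨b, hb⟩ := ((tendsto_cdf_atTop μ).eventually_const_lt hu₁).exists
  exact mem_range_of_exists_le_of_exists_ge (continuous_cdf μ) ⟨a, ha.le⟩ ⟨b, hb.le⟩

lemma exists_setOf_cdf_le_eq_Iic {u : ℝ} (hu : u ∈ Set.range (cdf μ)) (hu₁ : u < 1) :
    ∃ s, cdf μ s = u ∧ {x | cdf μ x ≤ u} = Set.Iic s := by
  obtain ⟨b, hb⟩ := ((tendsto_cdf_atTop μ).eventually_const_lt hu₁).exists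
  have level_bddAbove : BddAbove {x | cdf μ x = u} :=
    ⟨b, fun x hx ↦ le_of_not_gt fun hbx ↦ (hb.trans_le (monotone_cdf μ hbx.le)).ne' hx⟩
  have level_isClosed : IsClosed {x | cdf μ x = u} :=
    isClosed_eq (continuous_cdf μ) continuous_const
  obtain ⟨hs, hs_max⟩ := level_isClosed.isGreatest_csSup hu level_bddAbove
  refine ⟨_, hs, Set.Subset.antisymm (fun x hx ↦ ?_) fun x hx ↦ (monotone_cdf μ hx).trans hs.le⟩
  by_contra hsx
  exact hsx (hs_max (le_antisymm hx (hs.ge.trans (monotone_cdf μ (not_le.1 hsx).le))))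

lemma measure_setOf_cdf_le {u : ℝ} (hu : u ∈ Set.Icc 0 1) :
    μ {x | cdf μ x ≤ u} = ENNReal.ofReal u := by
  rcases hu.2.eq_or_lt with rfl | hu₁
  · simp [cdf_le_one]
  by_cases hrange : u ∈ Set.range (cdf μ)
  · obtain ⟨s, rfl, hs⟩ := exists_setOf_cdf_le_eq_Iic μ hrange hu₁
    rw [hs, ofReal_cdf]
  · have hu₀ : u = 0 := by
      by_contra hne
      exact hrange (Ioo_subset_range_cdf μ ⟨hu.1.lt_of_ne' hne, hu₁⟩)
    have hempty : {x | cdf μ x ≤ u} = ∅ := Set.eq_empty_of_forall_notMem fun x hx ↦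
      hrange ⟨x, le_antisymm hx (hu₀ ▸ cdf_nonneg μ x)⟩
    rw [hempty, hu₀, measure_empty, ENNReal.ofReal_zero]

lemma measurePreserving_cdf :
    MeasurePreserving
      (fun x ↦ (⟨cdf μ x, cdf_nonneg μ x, cdf_le_one μ x⟩ : unitInterval)) μ volume := by
  have hmeas : Measurable
      fun x ↦ (⟨cdf μ x, cdf_nonneg μ x, cdf_le_one μ x⟩ : unitInterval) :=
    (continuous_cdf μ).measurable.subtype_mk
  have := Measure.isProbabilityMeasure_map (μ := μ) hmeas.aemeasurable
  refine ⟨hmeas, Measure.ext_of_Iic _ _ fun u ↦ ?_⟩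
  rw [Measure.map_apply hmeas measurableSet_Iic, unitInterval.volume_Iic]
  exact measure_setOf_cdf_le μ u.2

end ProbabilityIntegralTransform

section Transport

variable {Z : Type*} [MeasurableSpace Z] [StandardBorelSpace Z]
  (P : Measure Z) [IsProbabilityMeasure P] [NullSingletonClass P]

lemma exists_measurable_map_eq {Y : Type*} [MeasurableSpace Y] [StandardBorelSpace Y] [Nonempty Y]
    (ν : Measure Y) [IsProbabilityMeasure ν] :
    ∃ X : Z → Y, Measurable X ∧ P.map X = ν := by
  have embedding := measurableEmbedding_embeddingReal Z
  have : IsProbabilityMeasure (P.map (embeddingReal Z)) :=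
    Measure.isProbabilityMeasure_map embedding.measurable.aemeasurable
  have : NullSingletonClass (P.map (embeddingReal Z)) :=
    ⟨fun x ↦ by
      rw [embedding.map_apply]
      exact (Set.subsingleton_singleton.preimage embedding.injective).measure_zero P⟩
  obtain ⟨g, g_meas, g_map⟩ := ν.exists_measurable_map_eq
  have uniform := (measurePreserving_cdf (P.map (embeddingReal Z))).comp
    (embedding.measurable.measurePreserving P)
  exact ⟨_, g_meas.comp uniform.measurable, by
    rw [← Measure.map_map g_meas uniform.measurable, uniform.map_eq, g_map]⟩

lemma exists_measurable_pairwise_disjoint_measureReal_eq {ι : Type*} [Fintype ι] {q : ι → ℝ}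
    (hq : q ∈ stdSimplex ℝ ι) :
    ∃ A : ι → Set Z, (∀ k, MeasurableSet (A k)) ∧ Pairwise (Function.onFun Disjoint A) ∧
      ∀ k, P.real (A k) = q k := by
  let : MeasurableSpace ι := ⊤
  have : DiscreteMeasurableSpace ι := ⟨fun _ ↦ trivial⟩
  let G : PMF ι := PMF.ofFintype (fun k ↦ ENNReal.ofReal (q k)) (by
    rw [← ENNReal.ofReal_sum_of_nonneg fun k _ ↦ hq.1 k, hq.2, ENNReal.ofReal_one])
  have : Nonempty ι := G.support_nonempty.to_type
  obtain ⟨X, X_meas, X_map⟩ := exists_measurable_map_eq P G.toMeasure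
  refine ⟨fun k ↦ X ⁻¹' {k}, fun k ↦ X_meas (measurableSet_singleton k),
    fun j k hjk ↦ Disjoint.preimage X (Set.disjoint_singleton.2 hjk), fun k ↦ ?_⟩
  rw [← map_measureReal_apply X_meas (measurableSet_singleton k), X_map, measureReal_def,
    PMF.toMeasure_apply_singleton _ _ (measurableSet_singleton k), PMF.ofFintype_apply,
    ENNReal.toReal_ofReal (hq.1 k)]

end Transport

section ClosedApproximation

variable {Z : Type*} [TopologicalSpace Z] [MeasurableSpace Z]

lemma exists_isClosed_subset_mul_measureReal_le (P : Measure Z) [IsFiniteMeasure P]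
    [P.WeaklyRegular] {A : Set Z} (hA : MeasurableSet A) {r : ℝ} (hr : r < 1) :
    ∃ F ⊆ A, IsClosed F ∧ r * P.real A ≤ P.real F := by
  rcases (measureReal_nonneg (μ := P) (s := A)).eq_or_lt with hA₀ | hA₀
  · exact ⟨∅, A.empty_subset, isClosed_empty, by simp [← hA₀]⟩
  · have hlt : ENNReal.ofReal (r * P.real A) < P A := by
      rw [← ofReal_measureReal (μ := P) (s := A), ENNReal.ofReal_lt_ofReal_iff hA₀]
      exact mul_lt_of_lt_one_left hA₀ hr
    obtain ⟨F, hFA, F_closed, hltF⟩ := hA.exists_lt_isClosed_of_ne_top (measure_ne_top P A) hlt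
    exact ⟨F, hFA, F_closed, (ENNReal.ofReal_le_iff_le_toReal (measure_ne_top P F)).1 hltF.le⟩

end ClosedApproximation

section Interpolation

variable {Z ι : Type*} [TopologicalSpace Z] [NormalSpace Z] [Finite ι] [Nonempty ι]
  {F : ι → Set Z}

lemma exists_partitionOfUnity_eq_zero_of_ne (hF : ∀ k, IsClosed (F k))
    (hdisj : Pairwise (Function.onFun Disjoint F)) :
    ∃ ρ : PartitionOfUnity ι Z, ∀ j k, j ≠ k → ∀ z ∈ F k, ρ j z = 0 := by
  let U : ι → Set Z := fun j ↦ ⋂ k ≠ j, (F k)ᶜ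
  have U_open : ∀ j, IsOpen (U j) := fun j ↦
    isOpen_iInter_of_finite fun k ↦ isOpen_iInter_of_finite fun _ ↦ (hF k).isOpen_compl
  have U_cover : Set.univ ⊆ ⋃ j, U j := by
    intro z _
    simp only [U, Set.mem_iUnion, Set.mem_iInter, Set.mem_compl_iff]
    by_cases hz : ∃ j, z ∈ F j
    · obtain ⟨j, hj⟩ := hz
      exact ⟨j, fun k hkj hk ↦ (hdisj hkj).notMem_of_mem_left hk hj⟩
    · exact ⟨Classical.arbitrary ι, fun k _ hk ↦ hz ⟨k, hk⟩⟩
  obtain ⟨ρ, hρ⟩ := PartitionOfUnity.exists_isSubordinate_of_locallyFinite isClosed_univ U U_open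
    (locallyFinite_of_finite U) U_cover
  refine ⟨ρ, fun j k hjk z hz ↦ image_eq_zero_of_notMem_tsupport fun hzj ↦ ?_⟩
  exact Set.mem_iInter₂.1 (hρ j hzj) k hjk.symm hz

variable {V : Type*} [AddCommGroup V] [Module ℝ V] [TopologicalSpace V] [ContinuousAdd V]
  [ContinuousSMul ℝ V]

lemma exists_continuous_mem_convexHull_eqOn (hF : ∀ k, IsClosed (F k))
    (hdisj : Pairwise (Function.onFun Disjoint F)) (η : ι → V) :
    ∃ f : Z → V, Continuous f ∧ (∀ z, f z ∈ convexHull ℝ (Set.range η)) ∧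
      ∀ k, ∀ z ∈ F k, f z = η k := by
  obtain ⟨ρ, hρ⟩ := exists_partitionOfUnity_eq_zero_of_ne hF hdisj
  refine ⟨fun z ↦ ∑ᶠ k, ρ k z • η k, ρ.continuous_finsum_smul fun _ _ _ ↦ continuousAt_const,
    fun z ↦ ?_, fun k z hz ↦ ?_⟩
  · exact (convex_convexHull ℝ _).finsum_mem (fun k ↦ ρ.nonneg k z)
      (ρ.sum_eq_one (Set.mem_univ z)) fun k _ ↦ subset_convexHull ℝ _ (Set.mem_range_self k)
  · have hρk : ρ k z = 1 := by
      rw [← ρ.sum_eq_one (Set.mem_univ z)]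
      exact (finsum_eq_single _ k fun j hjk ↦ hρ j k hjk z hz).symm
    calc ∑ᶠ j, ρ j z • η j = ρ k z • η k :=
          finsum_eq_single _ k fun j hjk ↦ by rw [hρ j k hjk z hz, zero_smul]
      _ = η k := by rw [hρk, one_smul]

end Interpolation

lemma sum_measureReal_mul_le_integral {Z ι : Type*} [MeasurableSpace Z] [Fintype ι]
    {P : Measure Z} {g : Z → ℝ} (hg : Integrable g P) (hg₀ : 0 ≤ᵐ[P] g)
    {F : ι → Set Z} (hF : ∀ k, MeasurableSet (F k))
    (hdisj : Pairwise (Function.onFun Disjoint F)) {c : ι → ℝ}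
    (hgc : ∀ k, ∀ z ∈ F k, g z = c k) :
    ∑ k, P.real (F k) * c k ≤ ∫ z, g z ∂P :=
  calc ∑ k, P.real (F k) * c k = ∑ k, ∫ z in F k, g z ∂P := by
        refine Finset.sum_congr rfl fun k _ ↦ ?_
        rw [setIntegral_congr_fun (hF k) (hgc k), setIntegral_const, smul_eq_mul]
    _ = ∫ z in ⋃ k, F k, g z ∂P :=
        (integral_iUnion_fintype hF hdisj fun _ ↦ hg.integrableOn).symm
    _ ≤ ∫ z, g z ∂P := setIntegral_le_integral hg hg₀

lemma exists_lt_one_sum_log_sub_le {κ : Type*} [Fintype κ] {ε : ℝ} (hε : 0 < ε) :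
    ∃ r < 1, ∀ a b : κ → ℝ, (∀ i, 0 < a i) → (∀ i, r * a i ≤ b i) →
      (∑ i, log (a i)) - ε ≤ ∑ i, log (b i) := by
  let n : ℝ := Fintype.card κ
  refine ⟨exp (-(ε / (n + 1))), exp_lt_one_iff.2 (neg_lt_zero.2 (by positivity)),
    fun a b ha hab ↦ ?_⟩
  calc (∑ i, log (a i)) - ε ≤ (∑ i, log (a i)) - n * (ε / (n + 1)) := by
        gcongr
        rw [mul_div_left_comm]
        exact mul_le_of_le_one_right hε.le ((div_le_one (by positivity)).2 (by linarith))
    _ = ∑ i, log (exp (-(ε / (n + 1))) * a i) := by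
        simp only [log_mul (exp_ne_zero _) (ha _).ne', log_exp, Finset.sum_add_distrib,
          Finset.sum_const, Finset.card_univ, nsmul_eq_mul]
        ring
    _ ≤ ∑ i, log (b i) := by
        gcongr with i
        · have := ha i; positivity
        · exact hab i

section Decoder

variable {Z : Type*} [TopologicalSpace Z] [PolishSpace Z] [MeasurableSpace Z] [BorelSpace Z]
  (P : Measure Z) [IsProbabilityMeasure P] [NullSingletonClass P]
  {V : Type*} [AddCommGroup V] [Module ℝ V] [TopologicalSpace V] [IsTopologicalAddGroup V]
  [ContinuousSMul ℝ V] {ι : Type*} [Fintype ι] {q : ι → ℝ}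

lemma exists_continuous_mul_mixture_le_integral (hq : q ∈ stdSimplex ℝ ι) (η : ι → V)
    {r : ℝ} (hr : r < 1) :
    ∃ f : Z → V, Continuous f ∧ (∀ z, f z ∈ convexHull ℝ (Set.range η)) ∧
      ∀ Φ : V → ℝ, ContinuousOn Φ (convexHull ℝ (Set.range η)) →
        (∀ v ∈ convexHull ℝ (Set.range η), 0 ≤ Φ v) →
        r * ∑ k, q k * Φ (η k) ≤ ∫ z, Φ (f z) ∂P := by
  obtain ⟨A, A_meas, A_disj, hPA⟩ := exists_measurable_pairwise_disjoint_measureReal_eq P hq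
  choose F hFA F_closed hPF using fun k ↦
    exists_isClosed_subset_mul_measureReal_le P (A_meas k) hr
  have F_disj : Pairwise (Function.onFun Disjoint F) :=
    fun j k hjk ↦ (A_disj hjk).mono (hFA j) (hFA k)
  have : Nonempty ι :=
    Finset.univ_nonempty_iff.1 (Finset.nonempty_of_sum_ne_zero (hq.2.trans_ne one_ne_zero))
  obtain ⟨f, f_cont, hf_mem, hfF⟩ := exists_continuous_mem_convexHull_eqOn F_closed F_disj η
  refine ⟨f, f_cont, hf_mem, fun Φ Φ_cont Φ_nonneg ↦ ?_⟩
  have Φf_integrable : Integrable (fun z ↦ Φ (f z)) P := by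
    obtain ⟨M, hM⟩ := ((Set.finite_range η).isCompact_convexHull ℝ).exists_bound_of_continuousOn
      Φ_cont
    exact .of_bound (Φ_cont.comp_continuous f_cont hf_mem).aestronglyMeasurable M
      (ae_of_all _ fun z ↦ hM _ (hf_mem z))
  calc r * ∑ k, q k * Φ (η k) = ∑ k, r * P.real (A k) * Φ (η k) := by
        simp only [Finset.mul_sum, hPA, mul_assoc]
    _ ≤ ∑ k, P.real (F k) * Φ (η k) := by
        gcongr with k
        · exact Φ_nonneg _ (subset_convexHull ℝ _ (Set.mem_range_self k))
        · exact hPF k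
    _ ≤ ∫ z, Φ (f z) ∂P :=
        sum_measureReal_mul_le_integral Φf_integrable (ae_of_all _ fun z ↦ Φ_nonneg _ (hf_mem z))
          (fun k ↦ (F_closed k).measurableSet) F_disj fun k z hz ↦ by rw [hfF k z hz]

theorem exists_continuous_sum_log_mixture_sub_le {κ : Type*} [Fintype κ] {H : Set V}
    (hH : Convex ℝ H) {Φ : κ → V → ℝ} (hΦ : ∀ i, ContinuousOn (Φ i) H)
    (hΦ₀ : ∀ i, ∀ v ∈ H, 0 ≤ Φ i v) (hq : q ∈ stdSimplex ℝ ι) {η : ι → V} (hη : ∀ k, η k ∈ H)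
    (hpos : ∀ i, 0 < ∑ k, q k * Φ i (η k)) {ε : ℝ} (hε : 0 < ε) :
    ∃ f : Z → V, Continuous f ∧ (∀ z, f z ∈ H) ∧
      (∑ i, log (∑ k, q k * Φ i (η k))) - ε ≤ ∑ i, log (∫ z, Φ i (f z) ∂P) := by
  have hull_subset : convexHull ℝ (Set.range η) ⊆ H := convexHull_min (Set.range_subset_iff.2 hη) hH
  obtain ⟨r, hr, hlog⟩ := exists_lt_one_sum_log_sub_le (κ := κ) hε
  obtain ⟨f, f_cont, hf_mem, hf⟩ := exists_continuous_mul_mixture_le_integral P hq η hr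
  exact ⟨f, f_cont, fun z ↦ hull_subset (hf_mem z), hlog _ _ hpos fun i ↦
    hf (Φ i) ((hΦ i).mono hull_subset) fun v hv ↦ hΦ₀ i v (hull_subset hv)⟩

end Decoder

section Bernoulli

variable {p : ℕ}

/-- The parameter space `[0,1]^p` of the Bernoulli family. -/
def bernParams (p : ℕ) : Set (Fin p → ℝ) := {η | ∀ j, η j ∈ Set.Icc 0 1}

lemma convex_bernParams : Convex ℝ (bernParams p) :=
  fun _ hη _ hθ _ _ ha hb hab j ↦ convex_Icc 0 1 (hη j) (hθ j) ha hb hab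

lemma continuous_bernDensity (x : Fin p → Bool) : Continuous (bernDensity x) :=
  continuous_finsetProd _ fun j _ ↦ by split_ifs <;> fun_prop

lemma bernDensity_nonneg (x : Fin p → Bool) {η : Fin p → ℝ} (hη : η ∈ bernParams p) :
    0 ≤ bernDensity x η :=
  Finset.prod_nonneg fun j _ ↦ by
    split_ifs
    exacts [(hη j).1, sub_nonneg.2 (hη j).2]

end Bernoulli

section Gaussian

variable {p : ℕ} {ξ : ℝ}

/-- The parameter space of the `ξ`-constrained Gaussian family: pairs `(μ, Σ)` with `Σ` a covariance
matrix all of whose eigenvalues are at least `ξ`, the latter encoded as `Σ - ξ I ≥ 0`. -/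
def gaussParams (p : ℕ) (ξ : ℝ) : Set ((Fin p → ℝ) × Matrix (Fin p) (Fin p) ℝ) :=
  {θ | θ.2.PosSemidef ∧ (θ.2 - ξ • (1 : Matrix (Fin p) (Fin p) ℝ)).PosSemidef}

lemma convex_setOf_posSemidef_sub {n : Type*} (B : Matrix n n ℝ) :
    Convex ℝ {A : Matrix n n ℝ | (A - B).PosSemidef} := by
  intro A hA A' hA' a b ha hb hab
  have : a • A + b • A' - B = a • (A - B) + b • (A' - B) := by
    rw [← sub_eq_zero, show b = 1 - a by linarith]
    module
  rw [Set.mem_ofPred_eq, this]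
  exact (hA.smul ha).add (hA'.smul hb)

lemma convex_gaussParams : Convex ℝ (gaussParams p ξ) := by
  have hconv := (convex_setOf_posSemidef_sub 0).inter
    (convex_setOf_posSemidef_sub (ξ • (1 : Matrix (Fin p) (Fin p) ℝ)))
  simp only [sub_zero] at hconv
  exact hconv.linear_preimage (LinearMap.snd ℝ (Fin p → ℝ) _)

lemma det_pos_of_mem_gaussParams (hξ : 0 < ξ) {θ : (Fin p → ℝ) × Matrix (Fin p) (Fin p) ℝ}
    (hθ : θ ∈ gaussParams p ξ) : 0 < θ.2.det := by
  have := (Matrix.PosDef.one.smul hξ).add_posSemidef hθ.2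
  rw [add_sub_cancel] at this
  exact this.det_pos

lemma continuousOn_gaussDensity (x : Fin p → ℝ) :
    ContinuousOn (fun θ : (Fin p → ℝ) × Matrix (Fin p) (Fin p) ℝ ↦ gaussDensity x θ.1 θ.2)
      {θ | θ.2.det ≠ 0} := by
  refine fun θ hdet ↦ ContinuousAt.continuousWithinAt ?_
  have inv_cont : ContinuousAt (fun θ : (Fin p → ℝ) × Matrix (Fin p) (Fin p) ℝ ↦ θ.2⁻¹) θ := by
    refine (continuousAt_matrix_inv θ.2 ?_).comp continuousAt_snd
    rw [Ring.inverse_eq_inv']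
    exact continuousAt_inv₀ hdet
  have det_rpow_cont : ContinuousAt
      (fun θ : (Fin p → ℝ) × Matrix (Fin p) (Fin p) ℝ ↦ θ.2.det ^ (-(1 : ℝ) / 2)) θ :=
    continuous_snd.matrix_det.continuousAt.rpow_const (.inl hdet)
  have quad_cont : Continuous fun t : (Fin p → ℝ) × Matrix (Fin p) (Fin p) ℝ ↦
      t.1 ⬝ᵥ t.2.mulVec t.1 :=
    continuous_fst.dotProduct (continuous_snd.matrix_mulVec continuous_fst)
  have exponent_cont : ContinuousAt (fun θ : (Fin p → ℝ) × Matrix (Fin p) (Fin p) ℝ ↦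
      (x - θ.1) ⬝ᵥ θ.2⁻¹.mulVec (x - θ.1)) θ :=
    quad_cont.continuousAt.comp ((continuousAt_const.sub continuousAt_fst).prodMk inv_cont)
  exact (continuousAt_const.mul det_rpow_cont).mul (exponent_cont.neg.div_const 2).rexp

lemma gaussDensity_nonneg (x μ : Fin p → ℝ) {S : Matrix (Fin p) (Fin p) ℝ} (hS : 0 ≤ S.det) :
    0 ≤ gaussDensity x μ S := by
  unfold gaussDensity
  positivity

end Gaussian

section StdGaussian

variable (d : ℕ)

instance : IsProbabilityMeasure (stdGaussian d) := by
  unfold stdGaussian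
  infer_instance

instance [NeZero d] : NullSingletonClass (stdGaussian d) :=
  have := ProbabilityTheory.nullSingletonClass_gaussianReal (μ := 0) one_ne_zero
  Measure.pi_nullSingletonClass'

end StdGaussian

theorem statement7_general {Z : Type*} [TopologicalSpace Z] [PolishSpace Z] [MeasurableSpace Z]
    [BorelSpace Z] (P : Measure Z) [IsProbabilityMeasure P] [NullSingletonClass P] (p : ℕ) :
    (∀ (n : ℕ) (xs : Fin n → (Fin p → Bool)) (K : ℕ) (q : Fin K → ℝ) (η : Fin K → (Fin p → ℝ)),
      (∀ k, 0 ≤ q k) → ∑ k, q k = 1 → (∀ k, η k ∈ bernParams p) →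
      (∀ i, 0 < ∑ k, q k * bernDensity (xs i) (η k)) →
      ∀ ε > (0 : ℝ), ∃ f : Z → (Fin p → ℝ), Continuous f ∧ (∀ z, f z ∈ bernParams p) ∧
        (∑ i, log (∑ k, q k * bernDensity (xs i) (η k))) - ε ≤
          ∑ i, log (∫ z, bernDensity (xs i) (f z) ∂P))
    ∧
    (∀ ξ : ℝ, 0 < ξ → ∀ (n : ℕ) (xs : Fin n → (Fin p → ℝ)) (K : ℕ) (q : Fin K → ℝ)
      (η : Fin K → (Fin p → ℝ) × Matrix (Fin p) (Fin p) ℝ),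
      (∀ k, 0 ≤ q k) → ∑ k, q k = 1 → (∀ k, η k ∈ gaussParams p ξ) →
      (∀ i, 0 < ∑ k, q k * gaussDensity (xs i) (η k).1 (η k).2) →
      ∀ ε > (0 : ℝ), ∃ f : Z → (Fin p → ℝ) × Matrix (Fin p) (Fin p) ℝ, Continuous f ∧
        (∀ z, f z ∈ gaussParams p ξ) ∧
        (∑ i, log (∑ k, q k * gaussDensity (xs i) (η k).1 (η k).2)) - ε ≤
          ∑ i, log (∫ z, gaussDensity (xs i) (f z).1 (f z).2 ∂P)) := by
  refine ⟨fun n xs K q η hq₀ hq₁ hη hpos ε hε ↦ ?_,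
    fun ξ hξ n xs K q η hq₀ hq₁ hη hpos ε hε ↦ ?_⟩
  · exact exists_continuous_sum_log_mixture_sub_le P convex_bernParams
      (fun i ↦ (continuous_bernDensity (xs i)).continuousOn)
      (fun i _ hv ↦ bernDensity_nonneg (xs i) hv) ⟨hq₀, hq₁⟩ hη hpos hε
  · exact exists_continuous_sum_log_mixture_sub_le P convex_gaussParams
      (fun i ↦ (continuousOn_gaussDensity (xs i)).mono fun _ hθ ↦
        (det_pos_of_mem_gaussParams hξ hθ).ne')
      (fun i _ hθ ↦ gaussDensity_nonneg (xs i) _ hθ.1.det_nonneg) ⟨hq₀, hq₁⟩ hη hpos hε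

/-- The core approximation step in the proof of Theorem 3 of the paper, in both the
Bernoulli-output and the `ξ`-constrained Gaussian-output cases: any finite mixture
`G = Σ_k π_k δ_{η_k}` over the output family, with finite log-likelihood
`ℓ(G) = Σ_i log Σ_k π_k Φ(x_i|η_k)`, can be realised up to `ε` in log-likelihood by a
continuous decoder `f` with values in the parameter space, pushed forward through the
standard Gaussian prior on `ℝ^d`. -/
theorem statement7 (p d : ℕ) (hp : 1 ≤ p) (hd : 1 ≤ d) :
    -- Bernoulli-output case
    (∀ (n : ℕ) (xs : Fin n → (Fin p → Bool)) (K : ℕ)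
      (π' : Fin K → ℝ) (η : Fin K → (Fin p → ℝ)),
      (∀ k, 0 ≤ π' k) → (∑ k, π' k) = 1 →
      (∀ k j, η k j ∈ Set.Icc (0 : ℝ) 1) →
      (∀ i, 0 < ∑ k, π' k * bernDensity (xs i) (η k)) →
      ∀ ε > (0 : ℝ), ∃ f : (Fin d → ℝ) → (Fin p → ℝ), Continuous f ∧
        (∀ z j, f z j ∈ Set.Icc (0 : ℝ) 1) ∧
        (∑ i, Real.log (∑ k, π' k * bernDensity (xs i) (η k))) - ε ≤
          ∑ i, Real.log (∫ z, bernDensity (xs i) (f z) ∂(stdGaussian d)))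
    ∧
    -- constrained Gaussian-output case
    (∀ ξ : ℝ, 0 < ξ →
      ∀ (n : ℕ) (xs : Fin n → (Fin p → ℝ)) (K : ℕ)
        (π' : Fin K → ℝ) (η : Fin K → (Fin p → ℝ) × Matrix (Fin p) (Fin p) ℝ),
        (∀ k, 0 ≤ π' k) → (∑ k, π' k) = 1 →
        (∀ k, ((η k).2).PosSemidef ∧
          ((η k).2 - ξ • (1 : Matrix (Fin p) (Fin p) ℝ)).PosSemidef) →
        (∀ i, 0 < ∑ k, π' k * gaussDensity (xs i) (η k).1 (η k).2) →
        ∀ ε > (0 : ℝ),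
          ∃ f : (Fin d → ℝ) → (Fin p → ℝ) × Matrix (Fin p) (Fin p) ℝ, Continuous f ∧
            (∀ z, ((f z).2).PosSemidef ∧
              ((f z).2 - ξ • (1 : Matrix (Fin p) (Fin p) ℝ)).PosSemidef) ∧
            (∑ i, Real.log (∑ k, π' k * gaussDensity (xs i) (η k).1 (η k).2)) - ε ≤
              ∑ i, Real.log (∫ z, gaussDensity (xs i) (f z).1 (f z).2 ∂(stdGaussian d))) := by
  have : NeZero d := ⟨Nat.one_le_iff_ne_zero.1 hd⟩
  exact statement7_general (stdGaussian d) p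
end

section
/- Let p, d ≥ 1, let P be a probability measure on ℝ^d, let w ∈ ℝ^d with P({z : wᵀz ≤ 0}) > 0, and let (α_k)_{k≥1} be nonnegative reals with α_k → +∞. Define σ_k²(z) = exp(α_k·tanh(α_k·(wᵀz)) − α_k). Then ∫_{ℝ^d} (2π·σ_k²(z))^{-p/2} dP(z) → +∞ as k → +∞. -/
open MeasureTheory Filter Real

/-! For `a ≥ 0`, the variance `exp (a * tanh (a * u) - a)` is at most `exp (-a)` on `{u ≤ 0}`.
A negative power of it is therefore bounded below there by a constant that tends to infinity with
`a`, and since `{u ≤ 0}` has positive measure the integral diverges as well. -/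

theorem tanh_nonpos_of_nonpos {x : ℝ} (hx : x ≤ 0) : tanh x ≤ 0 := by
  rw [tanh_eq_sinh_div_cosh]
  exact div_nonpos_of_nonpos_of_nonneg (sinh_nonpos_iff.2 hx) (cosh_pos x).le

theorem exp_mul_tanh_mul_sub_le_exp_neg {a t : ℝ} (ha : 0 ≤ a) (ht : t ≤ 0) :
    exp (a * tanh (a * t) - a) ≤ exp (-a) := by
  have tanh_nonpos : tanh (a * t) ≤ 0 :=
    tanh_nonpos_of_nonpos (mul_nonpos_of_nonneg_of_nonpos ha ht)
  have mul_tanh_nonpos : a * tanh (a * t) ≤ 0 := mul_nonpos_of_nonneg_of_nonpos ha tanh_nonpos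
  exact exp_le_exp.2 (by linarith)

theorem tendsto_const_mul_exp_neg_rpow_atTop {C s : ℝ} (hC : 0 < C) (hs : s < 0) :
    Tendsto (fun a ↦ (C * exp (-a)) ^ s) atTop atTop := by
  have base_tendsto : Tendsto (fun a ↦ C * exp (-a)) atTop (nhds 0) := by
    simpa only [mul_zero] using tendsto_exp_neg_atTop_nhds_zero.const_mul C
  have base_pos : ∀ a, C * exp (-a) ∈ Set.Ioi 0 := fun a ↦ mul_pos hC (exp_pos (-a))
  exact (tendsto_rpow_neg_nhdsGT_zero hs).comp
    (tendsto_nhdsWithin_iff.2 ⟨base_tendsto, .of_forall base_pos⟩)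

section

variable {Ω ι : Type*} [MeasurableSpace Ω] {μ : Measure Ω} {l : Filter ι}

theorem tendsto_lintegral_nhds_top_of_ae_restrict_le {S : Set Ω} (hS : μ S ≠ 0) {c : ι → ENNReal}
    {f : ι → Ω → ENNReal} (hc : Tendsto c l (nhds ⊤))
    (hcf : ∀ᶠ i in l, ∀ᵐ z ∂μ.restrict S, c i ≤ f i z) :
    Tendsto (fun i ↦ ∫⁻ z, f i z ∂μ) l (nhds ⊤) := by
  have lower_tendsto : Tendsto (fun i ↦ c i * μ S) l (nhds ⊤) := by
    simpa only [ENNReal.top_mul hS] using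
      ENNReal.Tendsto.mul_const (b := μ S) hc (Or.inl ENNReal.top_ne_zero)
  refine tendsto_nhds_top_mono lower_tendsto ?_
  filter_upwards [hcf] with i hi
  calc c i * μ S = ∫⁻ _ in S, c i ∂μ := (setLIntegral_const S (c i)).symm
    _ ≤ ∫⁻ z in S, f i z ∂μ := lintegral_mono_ae hi
    _ ≤ ∫⁻ z, f i z ∂μ := setLIntegral_le_lintegral S (f i)

theorem statement11_general {u : Ω → ℝ} (hu : AEMeasurable u μ) (hμ : 0 < μ {z | u z ≤ 0})
    {α : ι → ℝ} (hα : Tendsto α l atTop) {C s : ℝ} (hC : 0 < C) (hs : s < 0) :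
    Tendsto (fun k ↦ ∫⁻ z, ENNReal.ofReal
        ((C * exp (α k * tanh (α k * u z) - α k)) ^ s) ∂μ)
      l (nhds ⊤) := by
  have bound_tendsto : Tendsto (fun k ↦ ENNReal.ofReal ((C * exp (-α k)) ^ s)) l (nhds ⊤) :=
    ENNReal.tendsto_ofReal_atTop.comp ((tendsto_const_mul_exp_neg_rpow_atTop hC hs).comp hα)
  refine tendsto_lintegral_nhds_top_of_ae_restrict_le hμ.ne' bound_tendsto ?_
  filter_upwards [hα.eventually_ge_atTop 0] with k hk
  filter_upwards [ae_restrict_mem₀ (nullMeasurableSet_le hu aemeasurable_const)] with z hz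
  have variance_le : C * exp (α k * tanh (α k * u z) - α k) ≤ C * exp (-α k) :=
    mul_le_mul_of_nonneg_left (exp_mul_tanh_mul_sub_le_exp_neg hk hz) hC.le
  exact ENNReal.ofReal_le_ofReal (rpow_le_rpow_of_nonpos (by positivity) variance_le hs.le)

end

/-- The divergence claim for the `i`-th likelihood contribution in the proof of Theorem 1
of the paper: with `σ_k²(z) = exp(α_k tanh(α_k wᵀz) − α_k)` and `P({wᵀz ≤ 0}) > 0`,
`∫ (2π σ_k²(z))^{-p/2} dP(z) → +∞` as `k → ∞`. -/
theorem statement11 (p d : ℕ) (hp : 1 ≤ p) (hd : 1 ≤ d)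
    (P : Measure (Fin d → ℝ)) [IsProbabilityMeasure P]
    (w : Fin d → ℝ) (hw : 0 < P {z | dotProduct w z ≤ 0})
    (α : ℕ → ℝ) (hα0 : ∀ k, 0 ≤ α k) (hα : Tendsto α atTop atTop) :
    Tendsto (fun k : ℕ => ∫⁻ z, ENNReal.ofReal
        ((2 * π * Real.exp (α k * Real.tanh (α k * dotProduct w z) - α k))
          ^ (-(p : ℝ) / 2)) ∂P)
      atTop (nhds ⊤) := by
  have exponent_neg : -(p : ℝ) / 2 < 0 := by
    have : (0 : ℝ) < p := Nat.cast_pos.2 hp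
    linarith
  exact statement11_general (continuous_const.dotProduct continuous_id).aemeasurable hw hα
    two_pi_pos exponent_neg
end
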